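/- Let A be a Hopf algebra over a field K with bijective antipode S, and let U, V, W be left-right Yetter–Drinfel'd modules over A. Define for any two Yetter–Drinfel'd modules M, N the braiding c_{M,N} : M ⊗ N → N ⊗ M by c_{M,N}(m ⊗ n) = n₍₀₎ ⊗ n₍₁₎·m. Then the hexagon/Yang–Baxter identity holds: (c_{V,W} ⊗ id_U) ∘ (id_V ⊗ c_{U,W}) ∘ (c_{U,V} ⊗ id_W) = (id_W ⊗ c_{U,V}) ∘ (c_{U,W} ⊗ id_V) ∘ (id_U ⊗ c_{V,W}) as linear maps U ⊗ V ⊗ W → W ⊗ V ⊗ U. -/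

import Mathlib

/-!
In Sweedler notation the left-hand side sends `u ⊗ v ⊗ w` to
`w₍₀₎ ⊗ w₍₁₎·v₍₀₎ ⊗ w₍₂₎v₍₁₎·u`, and the right-hand side to
`w₍₀₎ ⊗ (w₍₂₎·v)₍₀₎ ⊗ (w₍₂₎·v)₍₁₎w₍₁₎·u`, after coassociativity of the coaction on `W`.
They agree because of the antipode-free form of the Yetter-Drinfel'd condition,
`(a₍₂₎·v)₍₀₎ ⊗ (a₍₂₎·v)₍₁₎a₍₁₎ = a₍₁₎·v₍₀₎ ⊗ a₍₂₎v₍₁₎` (`YBaux.key`), which follows from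
`S⁻¹(a₍₂₎)a₍₁₎ = ε(a)` (`YBaux.invAntipode_cancel`); the latter is obtained by applying the
injective anti-homomorphism `S` to both sides.
-/

/-!
STATEMENT 16: For a Hopf algebra `A` over a field `K` with bijective antipode and
left-right Yetter-Drinfel'd modules `U, V, W`, the braidings
`c_{M,N}(m ⊗ n) = n₍₀₎ ⊗ n₍₁₎·m` satisfy the Yang-Baxter identity
`(c_{V,W} ⊗ id)(id ⊗ c_{U,W})(c_{U,V} ⊗ id) = (id ⊗ c_{U,V})(c_{U,W} ⊗ id)(id ⊗ c_{V,W})`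
(up to the canonical associativity isomorphisms).
-/

open TensorProduct LinearMap

section

variable (K A : Type*) [Field K] [Ring A] [HopfAlgebra K A]

/-- The antipode as a linear map. -/
noncomputable def antipodeL : A →ₗ[K] A := HopfAlgebra.antipode (R := K)

/-- The action of `A` on a left `A`-module, as a `K`-linear map `A ⊗ V → V`. -/
noncomputable def actMap (V : Type*) [AddCommGroup V] [Module K V] [Module A V]
    [IsScalarTower K A V] : A ⊗[K] V →ₗ[K] V :=
  TensorProduct.lift (LinearMap.mk₂ K (fun a v => a • v)
    (fun a b v => add_smul a b v)
    (fun k a v => smul_assoc k a v)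
    (fun a u v => smul_add a u v)
    (fun a k v => (smul_comm a k v).symm))

variable {K A}

/-- Coassociativity of a right coaction `ρ : V → V ⊗ A`:
`(ρ ⊗ id) ∘ ρ = (id ⊗ Δ) ∘ ρ`. -/
def IsCoassoc {V : Type*} [AddCommGroup V] [Module K V]
    (ρ : V →ₗ[K] V ⊗[K] A) : Prop :=
  rTensor A ρ ∘ₗ ρ =
    (TensorProduct.assoc K V A A).symm.toLinearMap
      ∘ₗ lTensor V (Coalgebra.comul (R := K)) ∘ₗ ρ

/-- Counitality of a right coaction `ρ : V → V ⊗ A`: `(id ⊗ ε) ∘ ρ = id`. -/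
def IsCounital {V : Type*} [AddCommGroup V] [Module K V]
    (ρ : V →ₗ[K] V ⊗[K] A) : Prop :=
  lTensor V (Coalgebra.counit (R := K)) ∘ₗ ρ = (TensorProduct.rid K V).symm.toLinearMap

variable (K A)

/-- For a left action `act : A ⊗ V → V`, a right coaction `ρ : V → V ⊗ A` and twisting
maps `φ ψ : A → A`, the map `a ⊗ v ↦ a₍₂₎·v₍₀₎ ⊗ ψ(a₍₃₎) v₍₁₎ φ(a₍₁₎)`.
With `φ = S⁻¹`, `ψ = id` this is the right-hand side of the Yetter-Drinfel'd
compatibility condition. -/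
noncomputable def ydRHS (V : Type*) [AddCommGroup V] [Module K V]
    (act : A ⊗[K] V →ₗ[K] V) (ρ : V →ₗ[K] V ⊗[K] A) (φ ψ : A →ₗ[K] A) :
    A ⊗[K] V →ₗ[K] V ⊗[K] A :=
  lTensor V (mul' K A ∘ₗ lTensor A (mul' K A) ∘ₗ rTensor (A ⊗[K] A) ψ)
  ∘ₗ rTensor (A ⊗[K] (A ⊗[K] A)) act
  ∘ₗ (tensorTensorTensorComm K A A V (A ⊗[K] A)).toLinearMap
  ∘ₗ lTensor (A ⊗[K] A) (TensorProduct.assoc K V A A).toLinearMap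
  ∘ₗ lTensor (A ⊗[K] A) (rTensor A ρ)
  ∘ₗ lTensor (A ⊗[K] A) (TensorProduct.comm K A V).toLinearMap
  ∘ₗ lTensor (A ⊗[K] A) (rTensor V φ)
  ∘ₗ (TensorProduct.assoc K (A ⊗[K] A) A V).toLinearMap
  ∘ₗ rTensor V (rTensor A (Coalgebra.comul (R := K)))
  ∘ₗ rTensor V (TensorProduct.comm K A A).toLinearMap
  ∘ₗ rTensor V (Coalgebra.comul (R := K))

/-- The Yetter-Drinfel'd compatibility condition
`ρ(a·v) = a₍₂₎·v₍₀₎ ⊗ a₍₃₎ v₍₁₎ S⁻¹(a₍₁₎)`, where `Si` denotes `S⁻¹`. -/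
def IsYD (V : Type*) [AddCommGroup V] [Module K V]
    (act : A ⊗[K] V →ₗ[K] V) (ρ : V →ₗ[K] V ⊗[K] A) (Si : A →ₗ[K] A) : Prop :=
  ρ ∘ₗ act = ydRHS K A V act ρ Si LinearMap.id

/-- The braiding-type map `z ⊗ u ↦ u₍₀₎ ⊗ u₍₁₎·z` determined by an action on `Z`
and a coaction on `U`. -/
noncomputable def braidC (Z U : Type*) [AddCommGroup Z] [Module K Z]
    [AddCommGroup U] [Module K U]
    (σ : A ⊗[K] Z →ₗ[K] Z) (ρU : U →ₗ[K] U ⊗[K] A) :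
    Z ⊗[K] U →ₗ[K] U ⊗[K] Z :=
  lTensor U σ
  ∘ₗ (TensorProduct.assoc K U A Z).toLinearMap
  ∘ₗ (TensorProduct.comm K Z (U ⊗[K] A)).toLinearMap
  ∘ₗ lTensor Z ρU

/-- The diagonal action `a ⊗ (x ⊗ y) ↦ a₍₁₎·x ⊗ a₍₂₎·y` on a tensor product. -/
noncomputable def diagAct (X Y : Type*) [AddCommGroup X] [Module K X]
    [AddCommGroup Y] [Module K Y]
    (σX : A ⊗[K] X →ₗ[K] X) (σY : A ⊗[K] Y →ₗ[K] Y) :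
    A ⊗[K] (X ⊗[K] Y) →ₗ[K] X ⊗[K] Y :=
  TensorProduct.map σX σY
  ∘ₗ (tensorTensorTensorComm K A A X Y).toLinearMap
  ∘ₗ rTensor (X ⊗[K] Y) (Coalgebra.comul (R := K))

/-- The coaction `v ⊗ w ↦ v₍₀₎ ⊗ w₍₀₎ ⊗ w₍₁₎v₍₁₎` on a tensor product. -/
noncomputable def tensorCoact (V W : Type*) [AddCommGroup V] [Module K V]
    [AddCommGroup W] [Module K W]
    (ρV : V →ₗ[K] V ⊗[K] A) (ρW : W →ₗ[K] W ⊗[K] A) :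
    V ⊗[K] W →ₗ[K] (V ⊗[K] W) ⊗[K] A :=
  lTensor (V ⊗[K] W) (mul' K A ∘ₗ (TensorProduct.comm K A A).toLinearMap)
  ∘ₗ (tensorTensorTensorComm K V A W A).toLinearMap
  ∘ₗ TensorProduct.map ρV ρW

end

section

variable (K A : Type*) [Field K] [Ring A] [HopfAlgebra K A]

namespace YBaux

open Coalgebra HopfAlgebra

lemma actMap_tmul (V : Type*) [AddCommGroup V] [Module K V] [Module A V]
    [IsScalarTower K A V] (a : A) (v : V) : actMap K A V (a ⊗ₜ v) = a • v := rfl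

/-- The map `x ⊗ y ↦ S⁻¹(y) x`. -/
noncomputable def invMul (Si : A →ₗ[K] A) : A ⊗[K] A →ₗ[K] A :=
  mul' K A ∘ₗ rTensor A Si ∘ₗ (TensorProduct.comm K A A).toLinearMap

/-- `S⁻¹(a₍₂₎) a₍₁₎ = ε(a)`. -/
lemma invAntipode_cancel (Si : A →ₗ[K] A)
    (h₁ : Si ∘ₗ antipodeL K A = LinearMap.id) (h₂ : antipodeL K A ∘ₗ Si = LinearMap.id) :
    invMul K A Si ∘ₗ comul = Algebra.linearMap K A ∘ₗ counit := by
  have hS : ∀ t : A ⊗[K] A,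
      antipodeL K A (invMul K A Si t) = mul' K A ((antipode K).rTensor A t) := by
    intro t
    induction t with
    | zero => simp
    | add x y hx hy => simp only [map_add, hx, hy]
    | tmul x y =>
      have := LinearMap.congr_fun h₂ y
      simp only [antipodeL, LinearMap.comp_apply, LinearMap.id_apply] at this
      simp [invMul, antipodeL, antipode_mul_antidistrib, this]
  ext a
  apply (Function.LeftInverse.injective (LinearMap.congr_fun h₁) :
    Function.Injective (antipodeL K A))
  simp only [LinearMap.comp_apply, hS, mul_antipode_rTensor_comul_apply]
  simp [antipodeL, Algebra.algebraMap_eq_smul_one]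

section

variable {V : Type*} [AddCommGroup V] [Module K V]

variable (V) in
/-- Right multiplication on the second leg: `x ↦ (v ⊗ b ↦ v ⊗ b x)`. -/
noncomputable def mulR : A →ₗ[K] V ⊗[K] A →ₗ[K] V ⊗[K] A :=
  lTensorHom V ∘ₗ (LinearMap.mul K A).flip

lemma mulR_tmul (x b : A) (v : V) : mulR K A V x (v ⊗ₜ b) = v ⊗ₜ (b * x) := rfl

lemma mulR_mul (x y : A) (s : V ⊗[K] A) :
    mulR K A V x (mulR K A V y s) = mulR K A V (y * x) s := by
  induction s with
  | zero => simp
  | add x y hx hy => simp only [map_add, hx, hy]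
  | tmul v b => simp [mulR_tmul, mul_assoc]

variable [Module A V] [IsScalarTower K A V]

variable (V) in
/-- The map `(x ⊗ y) ⊗ (v ⊗ b) ↦ x·v ⊗ y b`. -/
noncomputable def legAct : (A ⊗[K] A) ⊗[K] (V ⊗[K] A) →ₗ[K] V ⊗[K] A :=
  TensorProduct.map (actMap K A V) (mul' K A) ∘ₗ
    (tensorTensorTensorComm K A A V A).toLinearMap

/-- The map `a ↦ a₍₁₎·v₍₀₎ ⊗ a₍₂₎ v₍₁₎`, where `s` stands for `v₍₀₎ ⊗ v₍₁₎`. -/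
noncomputable def diag (s : V ⊗[K] A) : A →ₗ[K] V ⊗[K] A :=
  legAct K A V ∘ₗ (TensorProduct.mk K (A ⊗[K] A) (V ⊗[K] A)).flip s ∘ₗ comul

/-- The Yetter-Drinfel'd condition, read as `ρ(a·v) = diag(a₍₂₎) S⁻¹(a₍₁₎)`. -/
lemma coact_smul (ρ : V →ₗ[K] V ⊗[K] A) (Si : A →ₗ[K] A)
    (hYD : IsYD K A V (actMap K A V) ρ Si) (a : A) (v : V) :
    ρ (a • v) = TensorProduct.lift
      ((LinearMap.lcomp K (V ⊗[K] A) (diag K A (ρ v))) ∘ₗ mulR K A V ∘ₗ Si) (comul a) := by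
  have h := LinearMap.congr_fun hYD (a ⊗ₜ v)
  simp only [LinearMap.comp_apply, actMap_tmul, ydRHS, rTensor_tmul] at h
  rw [h]
  generalize (comul a : A ⊗[K] A) = t
  induction t with
  | zero => simp
  | add x y hx hy => simp only [map_add, add_tmul, hx, hy]
  | tmul p q =>
    simp only [LinearEquiv.coe_coe, comm_tmul, rTensor_tmul, TensorProduct.assoc_tmul,
      lTensor_tmul, lift.tmul, LinearMap.comp_apply, lcomp_apply, diag,
      LinearMap.flip_apply, mk_apply]
    generalize (comul q : A ⊗[K] A) = d
    generalize ρ v = s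
    induction d with
    | zero => simp
    | add x y hx hy => simp only [map_add, add_tmul, hx, hy]
    | tmul x y =>
      induction s with
      | zero => simp
      | add x y hx hy => simp only [map_add, add_tmul, tmul_add, hx, hy]
      | tmul v b => simp [legAct, mulR_tmul, mul_assoc]

variable (V) in
/-- The map `x ⊗ y ↦ (y·v)₍₀₎ ⊗ (y·v)₍₁₎ x`. -/
noncomputable def coactMul (ρ : V →ₗ[K] V ⊗[K] A) (v : V) : A ⊗[K] A →ₗ[K] V ⊗[K] A :=
  TensorProduct.lift (LinearMap.compl₂ (mulR K A V)
    (ρ ∘ₗ actMap K A V ∘ₗ (TensorProduct.mk K A V).flip v))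

lemma coactMul_tmul (ρ : V →ₗ[K] V ⊗[K] A) (v : V) (x y : A) :
    coactMul K A V ρ v (x ⊗ₜ y) = mulR K A V x (ρ (y • v)) := rfl

/-- The antipode-free Yetter-Drinfel'd condition
`(a₍₂₎·v)₍₀₎ ⊗ (a₍₂₎·v)₍₁₎ a₍₁₎ = a₍₁₎·v₍₀₎ ⊗ a₍₂₎ v₍₁₎`. -/
lemma key (ρ : V →ₗ[K] V ⊗[K] A) (Si : A →ₗ[K] A)
    (h₁ : Si ∘ₗ antipodeL K A = LinearMap.id) (h₂ : antipodeL K A ∘ₗ Si = LinearMap.id)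
    (hYD : IsYD K A V (actMap K A V) ρ Si) (a : A) (v : V) :
    coactMul K A V ρ v (comul a) = legAct K A V (comul a ⊗ₜ ρ v) := by
  -- `B (x ⊗ y) = y₍₁₎·v₍₀₎ ⊗ y₍₂₎ v₍₁₎ x`
  set B : A ⊗[K] A →ₗ[K] V ⊗[K] A :=
    TensorProduct.lift (LinearMap.compl₂ (mulR K A V) (diag K A (ρ v))) with hB
  have step : ∀ t : A ⊗[K] A, coactMul K A V ρ v t =
      B (rTensor A (invMul K A Si) ((TensorProduct.assoc K A A A).symm (lTensor A comul t))) := by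
    intro t
    induction t with
    | zero => simp
    | add x y hx hy => simp only [map_add, hx, hy]
    | tmul x y =>
      rw [coactMul_tmul, coact_smul K A ρ Si hYD, lTensor_tmul]
      generalize (comul y : A ⊗[K] A) = d
      induction d with
      | zero => simp
      | add x y hx hy => simp only [map_add, tmul_add, hx, hy]
      | tmul p q => simp [hB, invMul, mulR_mul]
  rw [step, coassoc_symm_apply, ← LinearMap.comp_apply (rTensor A (invMul K A Si)),
    ← rTensor_comp, invAntipode_cancel K A Si h₁ h₂, rTensor_comp, LinearMap.comp_apply,
    rTensor_counit_comul]
  have h1 : ∀ s : V ⊗[K] A, mulR K A V 1 s = s := by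
    intro s
    induction s with
    | zero => simp
    | add x y hx hy => simp only [map_add, hx, hy]
    | tmul v b => simp [mulR_tmul]
  simp [hB, h1, diag]

end

section

variable {U V W : Type*} [AddCommGroup U] [Module K U] [Module A U] [IsScalarTower K A U]
  [AddCommGroup V] [Module K V]
  [AddCommGroup W] [Module K W]

variable (V) in
/-- The map `v ⊗ b ↦ v ⊗ b·u`. -/
noncomputable def actOn (u : U) : V ⊗[K] A →ₗ[K] V ⊗[K] U :=
  lTensor V (actMap K A U ∘ₗ (TensorProduct.mk K A U).flip u)

lemma actOn_tmul (u : U) (v : V) (b : A) : actOn K A V u (v ⊗ₜ b) = v ⊗ₜ (b • u) := rfl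

lemma braidC_tmul (u : U) (v : V) (ρ : V →ₗ[K] V ⊗[K] A) :
    braidC K A U V (actMap K A U) ρ (u ⊗ₜ v) = actOn K A V u (ρ v) := by
  simp only [braidC, LinearMap.comp_apply, lTensor_tmul, LinearEquiv.coe_coe, comm_tmul]
  generalize ρ v = s
  induction s with
  | zero => simp
  | add x y hx hy => simp only [map_add, add_tmul, hx, hy]
  | tmul v b => rfl

/-- The left-hand side in terms of `(w₍₀₎₍₀₎ ⊗ w₍₀₎₍₁₎) ⊗ w₍₁₎`; `s` stands for
`v₍₀₎ ⊗ v₍₁₎`. -/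
lemma lhs_eq [Module A V] [IsScalarTower K A V]
    (ρW : W →ₗ[K] W ⊗[K] A) (u : U) (s : V ⊗[K] A) (w : W) :
    rTensor U (braidC K A V W (actMap K A V) ρW)
      ((TensorProduct.assoc K V W U).symm
      (lTensor V (braidC K A U W (actMap K A U) ρW)
      (TensorProduct.assoc K V U W (actOn K A V u s ⊗ₜ w)))) =
    (TensorProduct.assoc K W V U).symm
      (lTensor W (actOn K A V u ∘ₗ legAct K A V ∘ₗ
        (TensorProduct.mk K (A ⊗[K] A) (V ⊗[K] A)).flip s)
      (TensorProduct.assoc K W A A (rTensor A ρW (ρW w)))) := by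
  induction s with
  | zero => simp
  | add x y hx hy =>
    simp only [map_add, add_tmul, hx, hy, lTensor_add, comp_add, LinearMap.add_apply]
  | tmul v b =>
    simp only [actOn_tmul, TensorProduct.assoc_tmul, lTensor_tmul, braidC_tmul]
    generalize ρW w = t
    induction t with
    | zero => simp
    | add x y hx hy => simp only [map_add, tmul_add, hx, hy]
    | tmul w c =>
      simp only [actOn_tmul, TensorProduct.assoc_symm_tmul, rTensor_tmul, braidC_tmul]
      generalize ρW w = r
      induction r with
      | zero => simp
      | add x y hx hy => simp only [map_add, add_tmul, hx, hy]
      | tmul w d => simp [actOn_tmul, legAct, actMap_tmul, mul_smul]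

lemma actOn_smul (u : U) (x : A) (s : V ⊗[K] A) :
    actOn K A V (x • u) s = actOn K A V u (mulR K A V x s) := by
  induction s with
  | zero => simp
  | add x y hx hy => simp only [map_add, hx, hy]
  | tmul v b => simp [mulR_tmul, actOn_tmul, mul_smul]

/-- The right-hand side in terms of `(w₍₀₎₍₀₎ ⊗ w₍₀₎₍₁₎) ⊗ w₍₁₎`. -/
lemma rhs_eq [Module A V] [IsScalarTower K A V]
    (ρV : V →ₗ[K] V ⊗[K] A) (ρW : W →ₗ[K] W ⊗[K] A) (u : U) (v : V) (w : W) :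
    lTensor W (braidC K A U V (actMap K A U) ρV)
      (TensorProduct.assoc K W U V
      (rTensor V (braidC K A U W (actMap K A U) ρW)
      ((TensorProduct.assoc K U W V).symm (u ⊗ₜ actOn K A W v (ρW w))))) =
    lTensor W (actOn K A V u ∘ₗ coactMul K A V ρV v)
      (TensorProduct.assoc K W A A (rTensor A ρW (ρW w))) := by
  generalize ρW w = t
  induction t with
  | zero => simp
  | add x y hx hy => simp only [map_add, tmul_add, hx, hy]
  | tmul w c =>
    simp only [actOn_tmul, TensorProduct.assoc_symm_tmul, rTensor_tmul, braidC_tmul]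
    generalize ρW w = r
    induction r with
    | zero => simp
    | add x y hx hy => simp only [map_add, add_tmul, hx, hy]
    | tmul w d =>
      simp only [actOn_tmul, TensorProduct.assoc_tmul, lTensor_tmul, braidC_tmul,
        LinearMap.comp_apply, coactMul_tmul, actOn_smul]

end

end YBaux

theorem yang_baxter
    (U V W : Type*) [AddCommGroup U] [Module K U] [Module A U] [IsScalarTower K A U]
    [AddCommGroup V] [Module K V] [Module A V] [IsScalarTower K A V]
    [AddCommGroup W] [Module K W] [Module A W] [IsScalarTower K A W]
    (ρU : U →ₗ[K] U ⊗[K] A) (ρV : V →ₗ[K] V ⊗[K] A) (ρW : W →ₗ[K] W ⊗[K] A)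
    (hcoassocU : IsCoassoc (K := K) (A := A) ρU)
    (hcounitU : IsCounital (K := K) (A := A) ρU)
    (hcoassocV : IsCoassoc (K := K) (A := A) ρV)
    (hcounitV : IsCounital (K := K) (A := A) ρV)
    (hcoassocW : IsCoassoc (K := K) (A := A) ρW)
    (hcounitW : IsCounital (K := K) (A := A) ρW)
    (Si : A →ₗ[K] A)
    (hSi₁ : Si ∘ₗ antipodeL K A = LinearMap.id)
    (hSi₂ : antipodeL K A ∘ₗ Si = LinearMap.id)
    (hYDU : IsYD K A U (actMap K A U) ρU Si)
    (hYDV : IsYD K A V (actMap K A V) ρV Si)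
    (hYDW : IsYD K A W (actMap K A W) ρW Si) :
    rTensor U (braidC K A V W (actMap K A V) ρW)
      ∘ₗ (TensorProduct.assoc K V W U).symm.toLinearMap
      ∘ₗ lTensor V (braidC K A U W (actMap K A U) ρW)
      ∘ₗ (TensorProduct.assoc K V U W).toLinearMap
      ∘ₗ rTensor W (braidC K A U V (actMap K A U) ρV)
    = (TensorProduct.assoc K W V U).symm.toLinearMap
      ∘ₗ lTensor W (braidC K A U V (actMap K A U) ρV)
      ∘ₗ (TensorProduct.assoc K W U V).toLinearMap
      ∘ₗ rTensor V (braidC K A U W (actMap K A U) ρW)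
      ∘ₗ (TensorProduct.assoc K U W V).symm.toLinearMap
      ∘ₗ lTensor U (braidC K A V W (actMap K A V) ρW)
      ∘ₗ (TensorProduct.assoc K U V W).toLinearMap := by
  have hW : TensorProduct.assoc K W A A ∘ₗ rTensor A ρW ∘ₗ ρW =
      lTensor W (Coalgebra.comul (R := K)) ∘ₗ ρW := by
    rw [show rTensor A ρW ∘ₗ ρW = _ from hcoassocW]
    ext w
    simp
  refine TensorProduct.ext_threefold fun u v w => ?_
  have hw := LinearMap.congr_fun hW w
  simp only [LinearMap.comp_apply, LinearEquiv.coe_coe] at hw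
  simp only [LinearMap.comp_apply, LinearEquiv.coe_coe, rTensor_tmul, lTensor_tmul,
    TensorProduct.assoc_tmul, YBaux.braidC_tmul]
  rw [YBaux.lhs_eq, YBaux.rhs_eq, hw]
  simp only [← LinearMap.comp_apply (lTensor W _) (lTensor W _), ← lTensor_comp]
  congr 3
  ext a
  exact congrArg (YBaux.actOn K A V u) (YBaux.key K A ρV Si hSi₁ hSi₂ hYDV a v).symm

end
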